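/- Let G be a profinite group (a compact Hausdorff totally disconnected topological group) and let σ : G → G be a continuous group endomorphism that is expansive, i.e. there is an open normal subgroup N of G with ⋂_{i∈ℕ} (σ^i)⁻¹(N) = {1}. Let Γ be a compact topological group acting continuously on G by group automorphisms. Then there exists an open normal subgroup U of G such that ⋂_{i∈ℕ} (σ^i)⁻¹(U) = {1} and γ • U = U for every γ ∈ Γ. -/

import Mathlib

/-- The largest subgroup of `N` stable under the action of `Γ`. -/
def Subgroup.smulCore (Γ : Type*) {G : Type*} [Group Γ] [Group G] [MulDistribMulAction Γ G]
    (N : Subgroup G) : Subgroup G where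
  carrier := {g | ∀ γ : Γ, γ • g ∈ N}
  one_mem' γ := by simp
  mul_mem' ha hb γ := by
    rw [smul_mul']
    exact N.mul_mem (ha γ) (hb γ)
  inv_mem' ha γ := by
    rw [smul_inv']
    exact N.inv_mem (ha γ)

namespace Subgroup

variable {Γ G : Type*} [Group Γ] [Group G] [MulDistribMulAction Γ G] {N : Subgroup G}

theorem mem_smulCore {g : G} : g ∈ N.smulCore Γ ↔ ∀ γ : Γ, γ • g ∈ N := Iff.rfl

theorem smulCore_le : N.smulCore Γ ≤ N := fun g hg => by
  simpa using mem_smulCore.1 hg 1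

theorem smul_mem_smulCore (γ : Γ) {g : G} (hg : g ∈ N.smulCore Γ) : γ • g ∈ N.smulCore Γ :=
  fun δ => by
    rw [smul_smul]
    exact hg (δ * γ)

theorem image_smul_smulCore (γ : Γ) :
    (γ • ·) '' (N.smulCore Γ : Set G) = (N.smulCore Γ : Set G) := by
  apply Set.Subset.antisymm
  · rintro _ ⟨g, hg, rfl⟩
    exact smul_mem_smulCore γ hg
  · intro g hg
    exact ⟨γ⁻¹ • g, smul_mem_smulCore γ⁻¹ hg, smul_inv_smul γ g⟩

theorem smulCore_normal (hN : N.Normal) : (N.smulCore Γ).Normal where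
  conj_mem g hg h γ := by
    rw [smul_mul', smul_mul', smul_inv']
    exact hN.conj_mem _ (hg γ) _

theorem isOpen_smulCore [TopologicalSpace Γ] [CompactSpace Γ] [TopologicalSpace G]
    [ContinuousSMul Γ G] (hN : IsOpen (N : Set G)) : IsOpen (N.smulCore Γ : Set G) := by
  have hclosed : IsClosed {p : Γ × G | p.1 • p.2 ∉ N} :=
    hN.isClosed_compl.preimage continuous_smul
  rw [← isClosed_compl_iff]
  convert isClosedMap_snd_of_compactSpace _ hclosed using 1
  ext g
  simp [mem_smulCore]

end Subgroup

/-- Let `G` be a profinite group with an expansive continuous endomorphism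
`σ`, and let a compact topological group `Γ` act continuously on `G` by group automorphisms.
Then there is an open normal subgroup `U` of `G` with `⋂ᵢ (σ^i)⁻¹(U) = 1` and `γ • U = U`
for all `γ ∈ Γ`. -/
theorem stmt9 {G : Type*} [Group G] [TopologicalSpace G] [IsTopologicalGroup G]
    [CompactSpace G] [T2Space G] [TotallyDisconnectedSpace G]
    (σ : G →* G) (hσcont : Continuous σ)
    (N : Subgroup G) (hNopen : IsOpen (N : Set G)) (hNnormal : N.Normal)
    (hNexp : (⋂ i : ℕ, (⇑σ)^[i] ⁻¹' (N : Set G)) = {1})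
    {Γ : Type*} [Group Γ] [TopologicalSpace Γ] [IsTopologicalGroup Γ] [CompactSpace Γ]
    [MulDistribMulAction Γ G] [ContinuousSMul Γ G] :
    ∃ U : Subgroup G, IsOpen (U : Set G) ∧ U.Normal ∧
      (⋂ i : ℕ, (⇑σ)^[i] ⁻¹' (U : Set G)) = {1} ∧
      ∀ γ : Γ, (γ • ·) '' (U : Set G) = (U : Set G) := by
  refine ⟨N.smulCore Γ, Subgroup.isOpen_smulCore hNopen, Subgroup.smulCore_normal hNnormal, ?_,
    Subgroup.image_smul_smulCore⟩
  apply Set.Subset.antisymm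
  · rw [← hNexp]
    exact Set.iInter_mono fun i => Set.preimage_mono Subgroup.smulCore_le
  · rintro _ rfl
    simp [iterate_map_one, one_mem]
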